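/- Suppose that ξ_r(y_ℓ) = δ_{ℓr}·V for all ℓ, r ∈ {1, …, n}, where ξ_r := Σ_{m=0}^{n} ∂/∂x_r^m and δ is the Kronecker delta. Then the coefficients satisfy Σ_{i=1}^{n} A_{i,ir}^ℓ = (1/2)·δ_{ℓr} for all ℓ, r ∈ {1, …, n}. -/

import Mathlib

/-- The `(n+1) × (n+1)` matrix whose `j`-th column is `(x_1^j, …, x_n^j, 1)`,
with entries in the polynomial ring in the variables `x_i^j`
(a variable is a pair `(i, j) : Fin n × Fin (n+1)`, `i` the coordinate index, `j` the vertex index). -/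
noncomputable def Vmat (n : ℕ) : Matrix (Fin (n+1)) (Fin (n+1)) (MvPolynomial (Fin n × Fin (n+1)) ℝ) :=
  Matrix.of fun r c => if h : (r : ℕ) < n then MvPolynomial.X (⟨r, h⟩, c) else 1

/-- The basic determinant `V`. -/
noncomputable def Vpoly (n : ℕ) : MvPolynomial (Fin n × Fin (n+1)) ℝ := (Vmat n).det

/-- The matrix of `V` with its `i`-th row replaced by `(x_j^0 x_k^0, …, x_j^n x_k^n)`. -/
noncomputable def Xmat (n : ℕ) (i j k : Fin n) :
    Matrix (Fin (n+1)) (Fin (n+1)) (MvPolynomial (Fin n × Fin (n+1)) ℝ) :=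
  Matrix.of fun r c =>
    if (r : ℕ) = (i : ℕ) then MvPolynomial.X (j, c) * MvPolynomial.X (k, c)
    else if h : (r : ℕ) < n then MvPolynomial.X (⟨r, h⟩, c) else 1

/-- The basic determinant `X_{i,jk}`. -/
noncomputable def Xpoly (n : ℕ) (i j k : Fin n) : MvPolynomial (Fin n × Fin (n+1)) ℝ :=
  (Xmat n i j k).det


/-- The Kronecker delta. -/
def kron {n : ℕ} (a b : Fin n) : ℝ := if a = b then 1 else 0

/-- `y_ℓ = Σ_{i,j,k} A_{i,jk}^ℓ X_{i,jk}`. -/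
noncomputable def ypoly (n : ℕ) (A : Fin n → Fin n → Fin n → Fin n → ℝ) (ℓ : Fin n) :
    MvPolynomial (Fin n × Fin (n+1)) ℝ :=
  ∑ i : Fin n, ∑ j : Fin n, ∑ k : Fin n, A ℓ i j k • Xpoly n i j k

theorem aux_prod {A ι : Type*} [CommRing A] [Algebra ℝ A] [DecidableEq ι] (D : Derivation ℝ A A)
    (s : Finset ι) (f : ι → A) :
    D (∏ i ∈ s, f i) = ∑ i ∈ s, ∏ j ∈ s, (if j = i then D (f j) else f j) := by
  induction s using Finset.induction_on with
  | empty => simp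
  | insert a s ha ih =>
    rw [Finset.prod_insert ha, D.leibniz, ih, Finset.sum_insert ha, Finset.prod_insert ha]
    have h1 : ∏ j ∈ s, (if j = a then D (f j) else f j) = ∏ j ∈ s, f j :=
      Finset.prod_congr rfl fun j hj => if_neg (by rintro rfl; exact ha hj)
    rw [h1, if_pos rfl, smul_eq_mul, smul_eq_mul, Finset.mul_sum, add_comm, mul_comm]
    congr 1
    refine Finset.sum_congr rfl fun i hi => ?_
    rw [Finset.prod_insert ha, if_neg (fun h => ha (by rw [h]; exact hi))]

theorem aux_det {A m : Type*} [CommRing A] [Algebra ℝ A] [DecidableEq m] [Fintype m]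
    (D : Derivation ℝ A A) (M : Matrix m m A) :
    D M.det = ∑ q, (M.updateRow q (fun c => D (M q c))).det := by
  simp only [Matrix.det_apply]
  rw [map_sum, Finset.sum_comm]
  refine Finset.sum_congr rfl fun σ _ => ?_
  rw [← Finset.smul_sum, Units.smul_def, Units.smul_def, map_zsmul, aux_prod]
  congr 1
  refine Fintype.sum_equiv σ _ _ fun i => Finset.prod_congr rfl fun j _ => ?_
  rw [Matrix.updateRow_apply]
  by_cases h : j = i
  · subst h; rw [if_pos rfl, if_pos rfl]
  · rw [if_neg h, if_neg (fun h' => h (σ.injective h'))]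

theorem aux_X (n : ℕ) (i j k : Fin n) : Xmat n i j k = (Vmat n).updateRow i.castSucc
    (fun c => MvPolynomial.X (j, c) * MvPolynomial.X (k, c)) := by
  ext1 a c
  simp [Xmat, Vmat, Matrix.updateRow_apply, Fin.ext_iff]

theorem aux_row (n : ℕ) (a : Fin n) (c) : Vmat n a.castSucc c = MvPolynomial.X (a, c) := by
  simp [Vmat]

theorem aux_last (n : ℕ) (c) : Vmat n (Fin.last n) c = 1 := by
  simp [Vmat]

theorem aux_V (n : ℕ) : Vpoly n ≠ 0 := by
  intro h
  have h2 := congrArg (MvPolynomial.eval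
    (fun p : Fin n × Fin (n+1) => if p.1.castSucc = p.2 then (1:ℝ) else 0)) h
  rw [Vpoly, RingHom.map_det, map_zero, Matrix.det_of_isLowerTriangular] at h2
  · rw [Fin.prod_univ_castSucc] at h2
    simp [aux_row, aux_last] at h2
  · intro a b hab
    have hab : a < b := hab
    induction a using Fin.lastCases with
    | last => exact absurd hab (not_lt.2 (Fin.le_last b))
    | cast a => simp [aux_row, hab.ne]

theorem aux_dup (n : ℕ) (i k : Fin n) :
    ((Vmat n).updateRow i.castSucc (fun c => MvPolynomial.X (k, c))).det =
      kron k i • Vpoly n := by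
  have : (fun c => MvPolynomial.X (k, c)) = Vmat n k.castSucc := by
    ext1 c; rw [aux_row]
  rw [this]
  by_cases h : k = i
  · subst h; simp [kron, Vpoly]
  · rw [Matrix.det_updateRow_eq_zero (by simpa using h)]; simp [kron, h]

theorem aux_main (n : ℕ) (r i j k : Fin n)
    (D : Derivation ℝ (MvPolynomial (Fin n × Fin (n+1)) ℝ) (MvPolynomial (Fin n × Fin (n+1)) ℝ))
    (hD : ∀ a c, D (MvPolynomial.X (a, c)) = MvPolynomial.C (kron a r)) :
    D (Xpoly n i j k) = (kron j r * kron k i + kron k r * kron j i) • Vpoly n := by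
  rw [Xpoly, aux_det, aux_X, Fin.sum_univ_castSucc, Finset.sum_eq_single i]
  · have h0 : (((Vmat n).updateRow i.castSucc
        (fun c => MvPolynomial.X (j, c) * MvPolynomial.X (k, c))).updateRow (Fin.last n)
        (fun c => D (((Vmat n).updateRow i.castSucc
        (fun c => MvPolynomial.X (j, c) * MvPolynomial.X (k, c))) (Fin.last n) c))).det = 0 := by
      apply Matrix.det_eq_zero_of_row_eq_zero (Fin.last n)
      intro c
      rw [Matrix.updateRow_self, Matrix.updateRow_ne (Fin.castSucc_lt_last i).ne', aux_last]
      simp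
    rw [h0, add_zero, Matrix.updateRow_idem]
    have : (fun c => D (((Vmat n).updateRow i.castSucc
        (fun c => MvPolynomial.X (j, c) * MvPolynomial.X (k, c))) i.castSucc c)) =
        ((MvPolynomial.C (kron j r) : MvPolynomial (Fin n × Fin (n+1)) ℝ) • fun c => (MvPolynomial.X (k, c) : MvPolynomial (Fin n × Fin (n+1)) ℝ)) +
        ((MvPolynomial.C (kron k r) : MvPolynomial (Fin n × Fin (n+1)) ℝ) • fun c => (MvPolynomial.X (j, c) : MvPolynomial (Fin n × Fin (n+1)) ℝ)) := by
      ext1 c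
      simp only [Matrix.updateRow_self, D.leibniz, hD, Pi.add_apply, Pi.smul_apply, smul_eq_mul]
      ring
    rw [this, Matrix.det_updateRow_add, Matrix.det_updateRow_smul, Matrix.det_updateRow_smul,
      aux_dup, aux_dup, add_smul, mul_smul, mul_smul, MvPolynomial.C_mul', MvPolynomial.C_mul']
  · intro a _ ha
    set M := (Vmat n).updateRow i.castSucc
        (fun c => MvPolynomial.X (j, c) * MvPolynomial.X (k, c)) with hM
    have : (fun c => D (M a.castSucc c)) = (MvPolynomial.C (kron a r) : MvPolynomial (Fin n × Fin (n+1)) ℝ) • M (Fin.last n) := by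
      ext1 c
      rw [Pi.smul_apply, hM, Matrix.updateRow_ne (by simpa using ha),
        Matrix.updateRow_ne (Fin.castSucc_lt_last i).ne', aux_last, aux_row, hD]
      simp
    rw [this, Matrix.det_updateRow_smul,
      Matrix.det_updateRow_eq_zero (Fin.castSucc_lt_last a).ne', mul_zero]
  · simp

/-- If `ξ_r(y_ℓ) = δ_{ℓr} V` for all `ℓ, r`, then `Σ_i A_{i,ir}^ℓ = (1/2) δ_{ℓr}`. -/
theorem coeff_translation_covariance (n : ℕ) (hn : 1 ≤ n)
    (A : Fin n → Fin n → Fin n → Fin n → ℝ)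
    (hA : ∀ ℓ i j k, A ℓ i j k = A ℓ i k j)
    (hy : ∀ ℓ r : Fin n,
      ∑ m : Fin (n+1), MvPolynomial.pderiv (r, m) (ypoly n A ℓ) = kron ℓ r • Vpoly n) :
    ∀ ℓ r : Fin n, ∑ i : Fin n, A ℓ i i r = (1 / 2) * kron ℓ r := by
  intro ℓ r
  have h := hy ℓ r
  let D : Derivation ℝ (MvPolynomial (Fin n × Fin (n+1)) ℝ) (MvPolynomial (Fin n × Fin (n+1)) ℝ) :=
    ∑ m : Fin (n+1), MvPolynomial.pderiv (r, m)
  have hDa : ∀ p, D p = ∑ m : Fin (n+1), MvPolynomial.pderiv (r, m) p := by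
    intro p
    have := map_sum (Derivation.coeFnAddMonoidHom (R := ℝ)
      (A := MvPolynomial (Fin n × Fin (n+1)) ℝ) (M := MvPolynomial (Fin n × Fin (n+1)) ℝ))
      (fun m : Fin (n+1) => MvPolynomial.pderiv (r, m)) Finset.univ
    have := congrFun this p
    rw [Finset.sum_apply] at this
    exact this
  have hD : ∀ a c, D (MvPolynomial.X (a, c)) = MvPolynomial.C (kron a r) := by
    intro a c
    rw [hDa]
    by_cases har : a = r
    · subst har
      simp [MvPolynomial.pderiv_X, Pi.single_apply, kron]
    · simp [MvPolynomial.pderiv_X, Pi.single_apply, kron, har]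
  rw [← hDa, ypoly] at h
  simp only [map_sum, Derivation.map_smul, aux_main n r _ _ _ D hD, smul_smul,
    ← Finset.sum_smul] at h
  have h2 := smul_left_injective ℝ (aux_V n) h
  have h3 : ∑ i, ∑ j, ∑ k, A ℓ i j k * (kron j r * kron k i + kron k r * kron j i)
      = 2 * ∑ i, A ℓ i i r := by
    rw [Finset.mul_sum]
    refine Finset.sum_congr rfl fun i _ => ?_
    simp only [mul_add, Finset.sum_add_distrib, kron, mul_ite, ite_mul, mul_one, mul_zero,
      one_mul, zero_mul, Finset.sum_ite_eq', Finset.mem_univ, if_true, Finset.sum_ite_irrel, Finset.sum_const_zero]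
    rw [hA ℓ i r i]; ring
  have h4 := h3.symm.trans h2
  linarith
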